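/- arXiv:2101.07545 — 2 statements merged into one kernel-verified Lean document; each statement's English description precedes it below -/
import Mathlib

section
/- Let H be a real Hilbert space, λ ∈ ℝ, and let f : H → (-∞,∞] be proper, λ-convex and lower semicontinuous. Let τ > 0 be such that (1 + τλ)^{-1} ≤ 2. Then for all x_0, x_τ ∈ H with ∂f(x_0) ≠ ∅ and ∂f(x_τ) ≠ ∅, one has Γ_τ(x_0, x_τ) ≤ (52/τ)‖x_τ − x_0‖² + 210 τ · max(|∇f|²(x_0), |∇f|²(x_τ)). -/
open Filter Topology MeasureTheory Set
open scoped ENNReal RealInnerProductSpace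

noncomputable section

attribute [local instance] Classical.propDecidable

variable {H : Type*} [NormedAddCommGroup H] [InnerProductSpace ℝ H] [CompleteSpace H]

/-- `f : H → (-∞,∞]` is proper: not identically `⊤` (and it never takes the value `⊥`). -/
def ProperFn (f : H → EReal) : Prop :=
  (∃ x, f x ≠ ⊤) ∧ ∀ x, f x ≠ ⊥

/-- `f` is `λ`-convex: `x ↦ f x - (λ/2)‖x‖²` is convex, expressed via the perturbed
convexity inequality. -/
def LambdaConvex (lam : ℝ) (f : H → EReal) : Prop :=
  ∀ x y : H, ∀ t : ℝ, 0 ≤ t → t ≤ 1 →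
    f ((1 - t) • x + t • y)
      ≤ ((1 - t : ℝ) : EReal) * f x + ((t : ℝ) : EReal) * f y
        - ((lam / 2 * (t * (1 - t)) * ‖x - y‖ ^ 2 : ℝ) : EReal)

/-- The subdifferential of a `λ`-convex function at `x` (contained in the domain of `f`). -/
def subdiff (lam : ℝ) (f : H → EReal) (x : H) : Set H :=
  {p : H | f x ≠ ⊤ ∧
    ∀ y : H, f x + ((⟪p, y - x⟫ + lam / 2 * ‖y - x‖ ^ 2 : ℝ) : EReal) ≤ f y}

/-- `∇f(x)`: the element of minimal norm of `∂f(x)` (junk value `0` if there is none). -/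
def gradMin (lam : ℝ) (f : H → EReal) (x : H) : H :=
  if h : ∃ p ∈ subdiff lam f x, ∀ q ∈ subdiff lam f x, ‖p‖ ≤ ‖q‖ then h.choose else 0

/-- `|∇f|(x) ∈ [0,∞]`, equal to `+∞` when `∂f(x) = ∅` (in particular when `f x = ⊤`). -/
def gradNorm (lam : ℝ) (f : H → EReal) (x : H) : ℝ≥0∞ :=
  if (subdiff lam f x).Nonempty then ENNReal.ofReal ‖gradMin lam f x‖ else ⊤

/-- The resolvent `J_τ(x)`: the minimizer of `y ↦ f y + ‖y-x‖²/(2τ)` (junk `0` if none). -/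
def Jres (f : H → EReal) (τ : ℝ) (x : H) : H :=
  if h : ∃ y : H, ∀ z : H,
      f y + ((‖y - x‖ ^ 2 / (2 * τ) : ℝ) : EReal)
        ≤ f z + ((‖z - x‖ ^ 2 / (2 * τ) : ℝ) : EReal)
  then h.choose else 0

/-- The Moreau–Yosida regularization `f_τ(x) = min_y (f y + ‖y-x‖²/(2τ))`. -/
def moreau (f : H → EReal) (τ : ℝ) (x : H) : ℝ :=
  (f (Jres f τ x)).toReal + ‖Jres f τ x - x‖ ^ 2 / (2 * τ)

/-- `γ` is absolutely continuous on `[a,b]` with an integrable derivative. -/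
abbrev IsACCurve (a b : ℝ) (γ : ℝ → H) : Prop :=
  ∃ g : ℝ → H, IntegrableOn g (Icc a b) ∧ ∀ t ∈ Icc a b, γ t = γ a + ∫ s in a..t, g s

/-- The action `I_f^{[a,b]}(γ) = ∫_a^b (‖γ̇‖² + |∇f|²(γ)) dt ∈ [0,∞]`, set to `+∞` when `γ`
is not absolutely continuous. -/
def actionFn (lam : ℝ) (f : H → EReal) (a b : ℝ) (γ : ℝ → H) : ℝ≥0∞ :=
  if h : IsACCurve a b γ then
    ∫⁻ t in Ioc a b, (ENNReal.ofReal (‖h.choose t‖ ^ 2) + gradNorm lam f (γ t) ^ 2)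
  else ⊤

/-- `Θ_{f,x₀,x₁}`: the action on `[0,1]` with endpoint constraints. -/
def Theta (lam : ℝ) (f : H → EReal) (x0 x1 : H) (γ : ℝ → H) : ℝ≥0∞ :=
  if γ 0 = x0 ∧ γ 1 = x1 then actionFn lam f 0 1 γ else ⊤

/-- `Γ_δ(x₀,x_δ)`: infimum of the action over curves joining the endpoints. -/
def GammaInf (lam : ℝ) (f : H → EReal) (δ : ℝ) (x0 xδ : H) : ℝ≥0∞ :=
  ⨅ (γ : ℝ → H) (_ : γ 0 = x0 ∧ γ δ = xδ), actionFn lam f 0 δ γ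

/-- Mosco convergence of `fh` to `f`: recovery sequences for the strong topology, and the
`liminf` inequality along weakly convergent sequences. -/
def Mosco (fh : ℕ → H → EReal) (f : H → EReal) : Prop :=
  (∀ x : H, ∃ xh : ℕ → H, Tendsto xh atTop (𝓝 x) ∧
      Filter.limsup (fun h => fh h (xh h)) atTop ≤ f x) ∧
  (∀ (xh : ℕ → H) (x : H),
      (∀ p : H, Tendsto (fun h => ⟪xh h, p⟫) atTop (𝓝 ⟪x, p⟫)) →
      f x ≤ Filter.liminf (fun h => fh h (xh h)) atTop)

/-!
Move both endpoints along their minimal subgradients, `y₀ = x₀ + τ∇f(x₀)` and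
`y₁ = x_τ + τ∇f(x_τ)`, so that the resolvent `J_τ` sends `y₀`, `y₁` back to `x₀`, `x_τ`.
Monotonicity of `∂f - λ` makes `J_τ` Lipschitz with constant `(1 + τλ)⁻¹`, so the image under `J_τ`
of the segment from `y₀` to `y₁` is a Lipschitz curve from `x₀` to `x_τ`. Its slope is controlled
because `τ⁻¹(c - J_τ c) ∈ ∂f(J_τ c)`: the slope at `J_τ c` exceeds `‖∇f(x₀)‖` by at most a multiple
of `‖c - y₀‖ / τ`.

Two facts use the Hilbert structure. The strongly convex functional defining `J_τ c` has a minimizer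
because its sublevel sets are closed with diameters shrinking to `0`. A Lipschitz curve is the
integral of an integrable derivative, obtained as a weak `L²` limit of its difference quotients
along an ultrafilter.
-/

section Subdifferential

variable {E : Type*} [NormedAddCommGroup E] [InnerProductSpace ℝ E]
  {lam τ : ℝ} {f : E → EReal} {x y p q : E}

lemma norm_combo_sub_sq (x y c : E) (t : ℝ) :
    ‖(1 - t) • x + t • y - c‖ ^ 2
      = (1 - t) * ‖x - c‖ ^ 2 + t * ‖y - c‖ ^ 2 - t * (1 - t) * ‖x - y‖ ^ 2 := by
  rw [show (1 - t) • x + t • y - c = (1 - t) • (x - c) + t • (y - c) by module,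
    show x - y = (x - c) - (y - c) by abel, norm_add_sq_real, norm_sub_sq_real (x - c),
    real_inner_smul_left, real_inner_smul_right, norm_smul, norm_smul, mul_pow, mul_pow,
    Real.norm_eq_abs, Real.norm_eq_abs, sq_abs, sq_abs]
  ring

lemma LambdaConvex.le_combo_of_le (hconv : LambdaConvex lam f) {a b t : ℝ}
    (hx : f x ≤ a) (hy : f y ≤ b) (ht₀ : 0 ≤ t) (ht₁ : t ≤ 1) :
    f ((1 - t) • x + t • y)
      ≤ ((1 - t) * a + t * b - lam / 2 * (t * (1 - t)) * ‖x - y‖ ^ 2 : ℝ) := by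
  have ht₀' : (0 : EReal) ≤ (t : ℝ) := EReal.coe_nonneg.mpr ht₀
  have ht₁' : (0 : EReal) ≤ (1 - t : ℝ) := EReal.coe_nonneg.mpr (sub_nonneg.mpr ht₁)
  refine (hconv x y t ht₀ ht₁).trans ?_
  rw [EReal.coe_sub _ (lam / 2 * _ * _), EReal.coe_add, EReal.coe_mul, EReal.coe_mul]
  exact EReal.sub_le_sub (add_le_add (mul_le_mul_of_nonneg_left hx ht₁')
    (mul_le_mul_of_nonneg_left hy ht₀')) le_rfl

lemma isClosed_subdiff (lam : ℝ) (f : E → EReal) (x : E) : IsClosed (subdiff lam f x) := by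
  induction hx : f x with
  | bot => simp [subdiff, hx]
  | top => simp [subdiff, hx]
  | coe a =>
    simp only [subdiff, hx, ne_eq, EReal.coe_ne_top, not_false_eq_true, true_and,
      ← EReal.coe_add, ofPred_forall]
    refine isClosed_iInter fun y ↦ isClosed_le ?_ continuous_const
    exact continuous_coe_real_ereal.comp (by fun_prop)

lemma convex_subdiff (lam : ℝ) (f : E → EReal) (x : E) : Convex ℝ (subdiff lam f x) := by
  induction hx : f x with
  | bot => simp [subdiff, hx, convex_univ]
  | top => simp [subdiff, hx, convex_empty]
  | coe a =>
    simp only [subdiff, hx, ne_eq, EReal.coe_ne_top, not_false_eq_true, true_and,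
      ← EReal.coe_add, ofPred_forall]
    refine convex_iInter fun y p hp q hq s t hs ht hst ↦ ?_
    set v : E → ℝ := fun p ↦ a + (⟪p, y - x⟫ + lam / 2 * ‖y - x‖ ^ 2) with hv
    have hcombo : v (s • p + t • q) = s • v p + t • v q := by
      simp only [hv, inner_add_left, real_inner_smul_left, smul_eq_mul]
      linear_combination (-(a + lam / 2 * ‖y - x‖ ^ 2)) * hst
    have hmax : v (s • p + t • q) ≤ max (v p) (v q) :=
      hcombo.trans_le (Convex.combo_le_max _ _ hs ht hst)
    exact (EReal.coe_le_coe_iff.mpr hmax).trans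
      ((EReal.coe_strictMono.monotone.map_max).trans_le (max_le hp hq))

lemma gradMin_mem [CompleteSpace E] (hne : (subdiff lam f x).Nonempty) :
    gradMin lam f x ∈ subdiff lam f x := by
  obtain ⟨p, hp, hmin⟩ := exists_norm_eq_iInf_of_complete_convex hne
    (isClosed_subdiff lam f x).isComplete (convex_subdiff lam f x) 0
  have hex : ∃ p ∈ subdiff lam f x, ∀ q ∈ subdiff lam f x, ‖p‖ ≤ ‖q‖ := by
    refine ⟨p, hp, fun q hq ↦ ?_⟩
    have hle := ciInf_le (f := fun w : subdiff lam f x ↦ ‖0 - (w : E)‖)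
      ⟨0, forall_mem_range.mpr fun _ ↦ norm_nonneg _⟩ ⟨q, hq⟩
    rwa [← hmin, zero_sub, zero_sub, norm_neg, norm_neg] at hle
  rw [gradMin, dif_pos hex]
  exact hex.choose_spec.1

lemma gradNorm_le_of_mem_subdiff (hp : p ∈ subdiff lam f x) :
    gradNorm lam f x ≤ ENNReal.ofReal ‖p‖ := by
  rw [gradNorm, if_pos ⟨p, hp⟩, gradMin]
  split_ifs with hex
  · exact ENNReal.ofReal_le_ofReal (hex.choose_spec.2 p hp)
  · simp

lemma exists_real_le_of_mem_subdiff (hlam : 0 < lam) (hbot : f x ≠ ⊥)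
    (hp : p ∈ subdiff lam f x) : ∃ m : ℝ, ∀ y, (m : EReal) ≤ f y := by
  lift f x to ℝ using ⟨hp.1, hbot⟩ with a ha
  refine ⟨a - ‖p‖ ^ 2 / (2 * lam), fun y ↦ le_trans ?_ (hp.2 y)⟩
  rw [← ha, ← EReal.coe_add, EReal.coe_le_coe_iff]
  have hinner := (abs_le.mp (abs_real_inner_le_norm p (y - x))).1
  have hsq : ‖p‖ ^ 2 / (2 * lam) + lam / 2 * ‖y - x‖ ^ 2 - ‖p‖ * ‖y - x‖
      = (‖p‖ - lam * ‖y - x‖) ^ 2 / (2 * lam) := by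
    field_simp
    ring
  have hsq_nonneg : 0 ≤ (‖p‖ - lam * ‖y - x‖) ^ 2 / (2 * lam) := by positivity
  linarith

lemma LambdaConvex.zero_mem_subdiff (hconv : LambdaConvex lam f) (htop : f x ≠ ⊤)
    (hmin : ∀ y, f x ≤ f y) : (0 : E) ∈ subdiff lam f x := by
  refine ⟨htop, fun y ↦ ?_⟩
  by_cases hbot : f x = ⊥
  · simp [hbot]
  by_cases hy : f y = ⊤
  · simp [hy]
  have hy' : f y ≠ ⊥ := ne_bot_of_le_ne_bot hbot (hmin y)
  lift f x to ℝ using ⟨htop, hbot⟩ with a ha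
  lift f y to ℝ using ⟨hy, hy'⟩ with b hb
  rw [inner_zero_left, zero_add, ← EReal.coe_add, EReal.coe_le_coe_iff]
  have hsegment : ∀ t ∈ Ioo (0 : ℝ) 1, a + lam / 2 * (1 - t) * ‖x - y‖ ^ 2 ≤ b := by
    intro t ht
    have hle := EReal.coe_le_coe_iff.mp ((hmin _).trans
      (hconv.le_combo_of_le ha.ge hb.ge ht.1.le ht.2.le))
    refine le_of_mul_le_mul_left ?_ ht.1
    linarith
  have hlim : Tendsto (fun t : ℝ ↦ a + lam / 2 * (1 - t) * ‖x - y‖ ^ 2) (𝓝[>] 0)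
      (𝓝 (a + lam / 2 * (1 - 0) * ‖x - y‖ ^ 2)) :=
    Tendsto.mono_left (Continuous.tendsto (by fun_prop) 0) nhdsWithin_le_nhds
  have hle := le_of_tendsto hlim (eventually_of_mem (Ioo_mem_nhdsGT one_pos) hsegment)
  rwa [sub_zero, mul_one, norm_sub_rev] at hle

lemma mul_sq_norm_sub_le_inner_of_mem_subdiff (hbot : ∀ z, f z ≠ ⊥)
    (hp : p ∈ subdiff lam f x) (hq : q ∈ subdiff lam f y) :
    lam * ‖x - y‖ ^ 2 ≤ ⟪p - q, x - y⟫ := by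
  have hxy := hp.2 y
  have hyx := hq.2 x
  lift f x to ℝ using ⟨hp.1, hbot x⟩ with a
  lift f y to ℝ using ⟨hq.1, hbot y⟩ with b
  rw [← EReal.coe_add, EReal.coe_le_coe_iff] at hxy hyx
  rw [← neg_sub x y, inner_neg_right, norm_neg] at hxy
  rw [inner_sub_left]
  linarith

lemma mul_norm_sub_le_norm_add_smul_sub (hbot : ∀ z, f z ≠ ⊥) (hτ : 0 ≤ τ)
    (hp : p ∈ subdiff lam f x) (hq : q ∈ subdiff lam f y) :
    (1 + τ * lam) * ‖x - y‖ ≤ ‖(x + τ • p) - (y + τ • q)‖ := by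
  rcases (norm_nonneg (x - y)).eq_or_lt with hxy | hxy
  · simp [← hxy]
  refine le_of_mul_le_mul_right ?_ hxy
  have hmono := mul_le_mul_of_nonneg_left (mul_sq_norm_sub_le_inner_of_mem_subdiff hbot hp hq) hτ
  calc (1 + τ * lam) * ‖x - y‖ * ‖x - y‖
      ≤ ‖x - y‖ ^ 2 + τ * ⟪p - q, x - y⟫ := by linarith
    _ = ⟪(x + τ • p) - (y + τ • q), x - y⟫ := by
        rw [add_sub_add_comm, ← smul_sub, inner_add_left, real_inner_self_eq_norm_sq,
          real_inner_smul_left]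
    _ ≤ ‖(x + τ • p) - (y + τ • q)‖ * ‖x - y‖ := real_inner_le_norm _ _

end Subdifferential

section Resolvent

variable {E : Type*} [NormedAddCommGroup E] [InnerProductSpace ℝ E]
  {lam τ : ℝ} {f : E → EReal} {x y p c : E}

lemma LambdaConvex.dist_le_sqrt_of_le_add (hconv : LambdaConvex lam f) (hlam : 0 < lam) {m ε : ℝ}
    (hm : ∀ z, (m : EReal) ≤ f z) (hx : f x ≤ (m + ε : ℝ)) (hy : f y ≤ (m + ε : ℝ)) :
    dist x y ≤ √(8 / lam * ε) := by
  have hmid := EReal.coe_le_coe_iff.mp ((hm _).trans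
    (hconv.le_combo_of_le hx hy (t := 1 / 2) (by norm_num) (by norm_num)))
  refine Real.le_sqrt_of_sq_le ?_
  rw [dist_eq_norm, div_mul_eq_mul_div, le_div_iff₀ hlam]
  linarith

lemma LambdaConvex.exists_forall_le [CompleteSpace E] (hconv : LambdaConvex lam f)
    (hlam : 0 < lam) (hlsc : LowerSemicontinuous f) (htop : ∃ x, f x ≠ ⊤)
    (hbdd : ∃ m : ℝ, ∀ x, (m : EReal) ≤ f x) : ∃ x, ∀ y, f x ≤ f y := by
  obtain ⟨b, hb⟩ := hbdd
  obtain ⟨x₀, hx₀⟩ := htop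
  have hinf_top : ⨅ x, f x ≠ ⊤ := ((iInf_le f x₀).trans_lt hx₀.lt_top).ne
  have hinf_bot : ⨅ x, f x ≠ ⊥ := ne_bot_of_le_ne_bot (EReal.coe_ne_bot b) (le_iInf hb)
  obtain ⟨m, hm⟩ : ∃ m : ℝ, (m : EReal) = ⨅ x, f x :=
    ⟨_, EReal.coe_toReal hinf_top hinf_bot⟩
  have hmle : ∀ x, (m : EReal) ≤ f x := fun x ↦ hm.trans_le (iInf_le f x)
  set ε : ℕ → ℝ := fun n ↦ 1 / ((n : ℝ) + 1)
  set S : ℕ → Set E := fun n ↦ {x | f x ≤ (m + ε n : ℝ)}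
  have hdist : ∀ n, ∀ x ∈ S n, ∀ y ∈ S n, dist x y ≤ √(8 / lam * ε n) :=
    fun n x hx y hy ↦ hconv.dist_le_sqrt_of_le_add hlam hmle hx hy
  have hεlim : Tendsto ε atTop (𝓝 0) := tendsto_one_div_add_atTop_nhds_zero_nat
  have hne : ∀ N, (⋂ n, ⋂ (_ : n ≤ N), S n).Nonempty := by
    intro N
    have hlt : ⨅ x, f x < (m + ε N : ℝ) := by
      rw [← hm, EReal.coe_lt_coe_iff]
      exact lt_add_of_pos_right m Nat.one_div_pos_of_nat
    obtain ⟨x, hx⟩ := iInf_lt_iff.mp hlt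
    refine ⟨x, mem_iInter₂.mpr fun n hn ↦ hx.le.trans (EReal.coe_le_coe_iff.mpr ?_)⟩
    exact add_le_add_right (Nat.one_div_le_one_div hn) m
  obtain ⟨x, hx⟩ := Metric.nonempty_iInter_of_nonempty_biInter
    (fun n ↦ hlsc.isClosed_preimage _) (fun n ↦ Metric.isBounded_iff.mpr ⟨_, hdist n⟩) hne
    (squeeze_zero (fun _ ↦ Metric.diam_nonneg)
      (fun n ↦ Metric.diam_le_of_forall_dist_le (Real.sqrt_nonneg _) (hdist n))
      (by simpa using (hεlim.const_mul (8 / lam)).sqrt))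
  have hlim : Tendsto (fun n ↦ ((m + ε n : ℝ) : EReal)) atTop (𝓝 ((m + 0 : ℝ) : EReal)) :=
    (continuous_coe_real_ereal.tendsto _).comp (hεlim.const_add m)
  have hxm := ge_of_tendsto' hlim (mem_iInter.mp hx)
  rw [add_zero] at hxm
  exact ⟨x, fun y ↦ hxm.trans (hmle y)⟩

/-- The Moreau–Yosida functional `y ↦ f y + ‖y - c‖² / (2τ)`, whose minimizer is `Jres f τ c`. -/
def proxFn (f : E → EReal) (τ : ℝ) (c y : E) : EReal :=
  f y + ((‖y - c‖ ^ 2 / (2 * τ) : ℝ) : EReal)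

lemma lambdaConvex_proxFn (hconv : LambdaConvex lam f) (τ : ℝ) (c : E) :
    LambdaConvex (lam + τ⁻¹) (proxFn f τ c) := by
  intro x y t ht₀ ht₁
  have hdistrib : ∀ {s : ℝ}, 0 ≤ s → ∀ (u : EReal) (r : ℝ),
      (s : EReal) * (u + r) = s * u + (s * r : ℝ) := fun hs u r ↦ by
    rw [EReal.left_distrib_of_nonneg_of_ne_top (EReal.coe_nonneg.mpr hs) (EReal.coe_ne_top _),
      EReal.coe_mul]
  have hquad : ‖(1 - t) • x + t • y - c‖ ^ 2 / (2 * τ)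
      = lam / 2 * (t * (1 - t)) * ‖x - y‖ ^ 2
        + ((1 - t) * (‖x - c‖ ^ 2 / (2 * τ)) + t * (‖y - c‖ ^ 2 / (2 * τ))
        + -((lam + τ⁻¹) / 2 * (t * (1 - t)) * ‖x - y‖ ^ 2)) := by
    rw [norm_combo_sub_sq, div_eq_mul_inv, mul_inv]
    ring
  refine (add_le_add_left (hconv x y t ht₀ ht₁) _).trans (le_of_eq ?_)
  rw [proxFn, proxFn, hdistrib (sub_nonneg.mpr ht₁), hdistrib ht₀, hquad,
    EReal.coe_add, ← add_assoc, EReal.sub_add_cancel, EReal.coe_add, EReal.coe_add, EReal.coe_neg,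
    sub_eq_add_neg (_ + _ : EReal), ← add_assoc, add_add_add_comm]

lemma mem_subdiff_proxFn_iff :
    p ∈ subdiff (lam + τ⁻¹) (proxFn f τ c) x ↔ p - τ⁻¹ • (x - c) ∈ subdiff lam f x := by
  have htop : proxFn f τ c x ≠ ⊤ ↔ f x ≠ ⊤ :=
    EReal.add_ne_top_iff_ne_top_left (EReal.coe_ne_bot _) (EReal.coe_ne_top _)
  refine and_congr htop (forall_congr' fun y ↦ ?_)
  have hexpand : ‖x - c‖ ^ 2 / (2 * τ) + (⟪p, y - x⟫ + (lam + τ⁻¹) / 2 * ‖y - x‖ ^ 2)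
      = (⟪p - τ⁻¹ • (x - c), y - x⟫ + lam / 2 * ‖y - x‖ ^ 2) + ‖y - c‖ ^ 2 / (2 * τ) := by
    rw [← sub_add_sub_cancel y x c, norm_add_sq_real, inner_sub_left, real_inner_smul_left,
      real_inner_comm (x - c), div_eq_mul_inv, div_eq_mul_inv, mul_inv]
    ring
  rw [proxFn, proxFn, add_assoc, ← EReal.coe_add, hexpand, EReal.coe_add, ← add_assoc,
    (EReal.addLECancellable_coe _).add_le_add_iff_right]

lemma proxFn_Jres_le [CompleteSpace E] (hbot : ∀ z, f z ≠ ⊥) (hconv : LambdaConvex lam f)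
    (hlsc : LowerSemicontinuous f) (hτ : 0 < τ) (hadm : 0 < 1 + τ * lam)
    (hp : p ∈ subdiff lam f x) (c z : E) :
    proxFn f τ c (Jres f τ c) ≤ proxFn f τ c z := by
  have hmodulus : 0 < lam + τ⁻¹ := by
    rw [show lam + τ⁻¹ = (1 + τ * lam) / τ by field_simp; ring]
    positivity
  have hpF : p + τ⁻¹ • (x - c) ∈ subdiff (lam + τ⁻¹) (proxFn f τ c) x := by
    rwa [mem_subdiff_proxFn_iff, add_sub_cancel_right]
  have hFbot : proxFn f τ c x ≠ ⊥ := by simp [proxFn, hbot]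
  have hFlsc : LowerSemicontinuous (proxFn f τ c) := by
    refine hlsc.add' (Continuous.lowerSemicontinuous ?_) fun y ↦
      EReal.continuousAt_add (.inr (EReal.coe_ne_bot _)) (.inr (EReal.coe_ne_top _))
    exact continuous_coe_real_ereal.comp (by fun_prop)
  have hex := (lambdaConvex_proxFn hconv τ c).exists_forall_le hmodulus hFlsc ⟨x, hpF.1⟩
    (exists_real_le_of_mem_subdiff hmodulus hFbot hpF)
  unfold Jres
  split_ifs with hJ
  · exact hJ.choose_spec z
  · exact absurd hex hJ

lemma inv_smul_sub_Jres_mem_subdiff [CompleteSpace E] (hbot : ∀ z, f z ≠ ⊥)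
    (hconv : LambdaConvex lam f) (hlsc : LowerSemicontinuous f) (hτ : 0 < τ)
    (hadm : 0 < 1 + τ * lam) (hne : ∃ x, (subdiff lam f x).Nonempty) (c : E) :
    τ⁻¹ • (c - Jres f τ c) ∈ subdiff lam f (Jres f τ c) := by
  obtain ⟨x, p, hp⟩ := hne
  have hmin := proxFn_Jres_le hbot hconv hlsc hτ hadm hp c
  have htop : proxFn f τ c (Jres f τ c) ≠ ⊤ :=
    ((hmin x).trans_lt (EReal.add_lt_top hp.1 (EReal.coe_ne_top _))).ne
  have hzero := mem_subdiff_proxFn_iff.mp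
    ((lambdaConvex_proxFn hconv τ c).zero_mem_subdiff htop hmin)
  rwa [zero_sub, ← smul_neg, neg_sub] at hzero

end Resolvent

section NormedSpaceCurves

variable {F : Type*} [NormedAddCommGroup F] [NormedSpace ℝ F] [CompleteSpace F]

lemma tendsto_integral_slope_zero {γ : ℝ → F} (hγ : Continuous γ) (a b : ℝ) :
    Tendsto (fun h ↦ ∫ s in a..b, h⁻¹ • (γ (s + h) - γ s)) (𝓝[≠] 0) (𝓝 (γ b - γ a)) := by
  have hint : ∀ u v, IntervalIntegrable γ volume u v := hγ.intervalIntegrable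
  have hslope : ∀ t, Tendsto (fun h ↦ h⁻¹ • ∫ s in t..(t + h), γ s) (𝓝[≠] 0) (𝓝 (γ t)) := by
    intro t
    simpa using hasDerivAt_iff_tendsto_slope_zero.mp (hγ.integral_hasStrictDerivAt t t).hasDerivAt
  refine ((hslope b).sub (hslope a)).congr fun h ↦ ?_
  rw [intervalIntegral.integral_smul, intervalIntegral.integral_sub
    (Continuous.intervalIntegrable (by fun_prop) _ _) (hint _ _),
    intervalIntegral.integral_comp_add_right γ, ← smul_sub,
    intervalIntegral.integral_interval_sub_interval_comm' (hint _ _) (hint _ _) (hint _ _)]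

lemma ae_norm_le_of_lipschitzWith {γ g : ℝ → F} {K : NNReal} {a b : ℝ} (hγ : LipschitzWith K γ)
    (hab : a ≤ b) (hg : IntegrableOn g (Icc a b))
    (hprim : ∀ t ∈ Icc a b, γ t = γ a + ∫ s in a..t, g s) :
    ∀ᵐ t ∂volume.restrict (Ioc a b), ‖g t‖ ≤ K := by
  have hint : IntervalIntegrable g volume a b :=
    (intervalIntegrable_iff_integrableOn_Icc_of_le hab).mpr hg
  rw [ae_restrict_iff' measurableSet_Ioc]
  filter_upwards [hint.ae_hasDerivAt_integral, Measure.ae_ne volume b] with t hderiv hne ht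
  have hγderiv : HasDerivAt γ (g t) t := by
    rw [uIcc_of_le hab] at hderiv
    refine ((hderiv (Ioc_subset_Icc_self ht) a (left_mem_Icc.mpr hab)).const_add
      (γ a)).congr_of_eventuallyEq ?_
    filter_upwards [Ioo_mem_nhds ht.1 (ht.2.lt_of_ne hne)] with s hs
    exact hprim s (Ioo_subset_Icc_self hs)
  exact hγderiv.deriv ▸ norm_deriv_le_of_lipschitz hγ

end NormedSpaceCurves

section LipschitzCurves

variable {E : Type*} [NormedAddCommGroup E] [InnerProductSpace ℝ E] [CompleteSpace E]

lemma exists_tendsto_inner_of_norm_le {ι : Type*} {u : ι → E} {C : ℝ} (hu : ∀ i, ‖u i‖ ≤ C)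
    (𝒰 : Ultrafilter ι) :
    ∃ x, ∀ y, Tendsto (fun i ↦ ⟪u i, y⟫) 𝒰 (𝓝 ⟪x, y⟫) := by
  let a : ι → WeakDual ℝ E := fun i ↦ StrongDual.toWeakDual (innerSL ℝ (u i))
  have ha : ∀ᶠ i in (𝒰 : Filter ι),
      a i ∈ WeakDual.toStrongDual ⁻¹' Metric.closedBall (0 : StrongDual ℝ E) C :=
    Eventually.of_forall fun i ↦
      mem_closedBall_zero_iff.mpr ((innerSL_apply_norm ℝ (u i)).trans_le (hu i))
  obtain ⟨l, -, hl⟩ := (WeakDual.isCompact_closedBall (0 : StrongDual ℝ E) C).ultrafilter_le_nhds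
    (𝒰.map a) (le_principal_iff.mpr ha)
  refine ⟨(InnerProductSpace.toDual ℝ E).symm (WeakDual.toStrongDual l), fun y ↦ ?_⟩
  rw [InnerProductSpace.toDual_symm_apply]
  exact ((WeakDual.eval_continuous y).tendsto l).comp hl

lemma exists_integrable_tendsto_inner_setIntegral {α ι : Type*} {m : MeasurableSpace α}
    {μ : Measure α} [IsFiniteMeasure μ] {G : ι → α → E} {C : ℝ}
    (hG : ∀ i, AEStronglyMeasurable (G i) μ) (hC : ∀ i x, ‖G i x‖ ≤ C) (𝒰 : Ultrafilter ι) :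
    ∃ g : α → E, Integrable g μ ∧ ∀ s, MeasurableSet s → ∀ v : E,
      Tendsto (fun i ↦ ⟪v, ∫ x in s, G i x ∂μ⟫) 𝒰 (𝓝 ⟪v, ∫ x in s, g x ∂μ⟫) := by
  have hmem : ∀ i, MemLp (G i) 2 μ := fun i ↦
    MemLp.of_bound (hG i) C (Eventually.of_forall (hC i))
  have hnorm : ∀ i, ‖(hmem i).toLp‖ ≤ measureUnivNNReal μ ^ (2 : ℝ≥0∞).toReal⁻¹ * max C 0 :=
    fun i ↦ Lp.norm_le_of_ae_bound (le_max_right _ _) <| by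
      filter_upwards [(hmem i).coeFn_toLp] with x hx
      exact hx ▸ (hC i x).trans (le_max_left _ _)
  obtain ⟨g, hg⟩ := exists_tendsto_inner_of_norm_le hnorm 𝒰
  refine ⟨g, (Lp.memLp g).integrable one_le_two, fun s hs v ↦ ?_⟩
  have hlim := hg (indicatorConstLp 2 hs (measure_ne_top μ s) v)
  simp only [real_inner_comm (indicatorConstLp 2 hs (measure_ne_top μ s) v),
    L2.inner_indicatorConstLp_eq_inner_setIntegral ℝ] at hlim
  refine hlim.congr fun i ↦ ?_
  rw [integral_congr_ae (ae_restrict_of_ae (hmem i).coeFn_toLp)]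

lemma isACCurve_of_lipschitzWith {γ : ℝ → E} {K : NNReal} (hγ : LipschitzWith K γ) (a b : ℝ) :
    IsACCurve a b γ := by
  let G : ℝ → ℝ → E := fun h t ↦ h⁻¹ • (γ (t + h) - γ t)
  have hcont : ∀ h, Continuous (G h) := fun h ↦ by
    have := hγ.continuous
    fun_prop
  have hbound : ∀ h t, ‖G h t‖ ≤ K := by
    intro h t
    have hlip := hγ.norm_sub_le (t + h) t
    rw [add_sub_cancel_left] at hlip
    rw [norm_smul, norm_inv]
    exact inv_mul_le_of_le_mul₀ (norm_nonneg h) K.2 (by linarith)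
  let 𝒰 : Ultrafilter ℝ := Ultrafilter.of (𝓝[≠] 0)
  obtain ⟨g, hg, hlim⟩ := exists_integrable_tendsto_inner_setIntegral
    (μ := volume.restrict (Icc a b)) (fun h ↦ (hcont h).aestronglyMeasurable) hbound 𝒰
  refine ⟨g, hg, fun t ht ↦ ?_⟩
  have hrestrict : ∀ F : ℝ → E,
      ∫ s in Ioc a t, F s ∂volume.restrict (Icc a b) = ∫ s in a..t, F s := fun F ↦ by
    rw [intervalIntegral.integral_of_le ht.1, Measure.restrict_restrict_of_subset
      (Ioc_subset_Icc_self.trans (Icc_subset_Icc_right ht.2))]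
  have hintegral : ∫ s in a..t, g s = γ t - γ a := by
    refine ext_inner_left ℝ fun v ↦ ?_
    have hweak := hlim (Ioc a t) measurableSet_Ioc v
    simp only [hrestrict] at hweak
    exact tendsto_nhds_unique hweak ((tendsto_const_nhds.inner
      (tendsto_integral_slope_zero hγ.continuous a t)).mono_left (Ultrafilter.of_le _))
  rw [hintegral, add_sub_cancel]

lemma actionFn_le_of_lipschitzWith {lam : ℝ} {f : E → EReal} {γ : ℝ → E} {K : NNReal} {B : ℝ≥0∞}
    {a b : ℝ} (hγ : LipschitzWith K γ) (hab : a ≤ b)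
    (hB : ∀ t ∈ Ioc a b, gradNorm lam f (γ t) ≤ B) :
    actionFn lam f a b γ ≤ (K ^ 2 + B ^ 2) * ENNReal.ofReal (b - a) := by
  have hAC := isACCurve_of_lipschitzWith hγ a b
  have hspeed := ae_norm_le_of_lipschitzWith hγ hab hAC.choose_spec.1 hAC.choose_spec.2
  rw [actionFn, dif_pos hAC]
  calc ∫⁻ t in Ioc a b, (ENNReal.ofReal (‖hAC.choose t‖ ^ 2) + gradNorm lam f (γ t) ^ 2)
      ≤ ∫⁻ _ in Ioc a b, ((K : ℝ≥0∞) ^ 2 + B ^ 2) := by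
        refine lintegral_mono_ae ?_
        filter_upwards [hspeed, ae_restrict_mem measurableSet_Ioc] with t hK ht
        rw [ENNReal.ofReal_pow (norm_nonneg _)]
        gcongr
        · exact ENNReal.ofReal_le_of_le_toReal hK
        · exact hB t ht
    _ = (K ^ 2 + B ^ 2) * ENNReal.ofReal (b - a) := by
        rw [lintegral_const, Measure.restrict_apply_univ, Real.volume_Ioc]

end LipschitzCurves

section Interpolation

variable {lam τ L : ℝ} {f : H → EReal} {x y p q : H} (hbot : ∀ z, f z ≠ ⊥)
  (hconv : LambdaConvex lam f) (hlsc : LowerSemicontinuous f) (hτ : 0 < τ)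
  (hadm : 0 < 1 + τ * lam)

include hbot hconv hlsc hτ hadm

lemma Jres_add_smul (hp : p ∈ subdiff lam f x) : Jres f τ (x + τ • p) = x := by
  have hmem := inv_smul_sub_Jres_mem_subdiff hbot hconv hlsc hτ hadm ⟨x, p, hp⟩ (x + τ • p)
  have hle := mul_norm_sub_le_norm_add_smul_sub hbot hτ.le hmem hp
  rw [smul_inv_smul₀ hτ.ne', add_sub_cancel, sub_self, norm_zero] at hle
  exact sub_eq_zero.mp (norm_le_zero_iff.mp (nonpos_of_mul_nonpos_right hle hadm))

lemma norm_Jres_sub_le (hL : (1 + τ * lam)⁻¹ ≤ L) (hne : ∃ x, (subdiff lam f x).Nonempty)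
    (c d : H) : ‖Jres f τ c - Jres f τ d‖ ≤ L * ‖c - d‖ := by
  have hmem := inv_smul_sub_Jres_mem_subdiff hbot hconv hlsc hτ hadm hne
  have hle := mul_norm_sub_le_norm_add_smul_sub hbot hτ.le (hmem c) (hmem d)
  simp only [smul_inv_smul₀ hτ.ne', add_sub_cancel] at hle
  exact ((le_inv_mul_iff₀ hadm).mpr hle).trans (by gcongr)

lemma gradNorm_Jres_le (hL : (1 + τ * lam)⁻¹ ≤ L) (hp : p ∈ subdiff lam f x) (c : H) :
    gradNorm lam f (Jres f τ c)
      ≤ ENNReal.ofReal (‖p‖ + (1 + L) * (‖c - (x + τ • p)‖ / τ)) := by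
  have hne : ∃ x, (subdiff lam f x).Nonempty := ⟨x, p, hp⟩
  have hmem := inv_smul_sub_Jres_mem_subdiff hbot hconv hlsc hτ hadm hne c
  refine (gradNorm_le_of_mem_subdiff hmem).trans (ENNReal.ofReal_le_ofReal ?_)
  have hlip := norm_Jres_sub_le hbot hconv hlsc hτ hadm hL hne c (x + τ • p)
  rw [Jres_add_smul hbot hconv hlsc hτ hadm hp] at hlip
  have hdecomp : τ⁻¹ • (c - Jres f τ c)
      = p + τ⁻¹ • ((c - (x + τ • p)) - (Jres f τ c - x)) := by
    rw [← inv_smul_smul₀ hτ.ne' p, ← smul_add, smul_inv_smul₀ hτ.ne']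
    congr 1
    abel
  calc ‖τ⁻¹ • (c - Jres f τ c)‖
      ≤ ‖p‖ + τ⁻¹ * ‖(c - (x + τ • p)) - (Jres f τ c - x)‖ := by
        rw [hdecomp, ← norm_smul_of_nonneg (inv_nonneg.mpr hτ.le)]
        exact norm_add_le _ _
    _ ≤ ‖p‖ + τ⁻¹ * (‖c - (x + τ • p)‖ + L * ‖c - (x + τ • p)‖) := by
        gcongr
        exact (norm_sub_le _ _).trans (by gcongr)
    _ = ‖p‖ + (1 + L) * (‖c - (x + τ • p)‖ / τ) := by ring

lemma GammaInf_le_of_mem_subdiff (hL : (1 + τ * lam)⁻¹ ≤ L) (hp : p ∈ subdiff lam f x)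
    (hq : q ∈ subdiff lam f y) {δ : ℝ} (hδ : δ = ‖(y + τ • q) - (x + τ • p)‖ / τ) :
    GammaInf lam f τ x y
      ≤ ENNReal.ofReal (((L * δ) ^ 2 + (‖p‖ + (1 + L) * δ) ^ 2) * τ) := by
  have hL₀ : 0 ≤ L := (inv_pos.mpr hadm).le.trans hL
  have hδ₀ : 0 ≤ δ := hδ ▸ by positivity
  set c : ℝ → H := fun t ↦ AffineMap.lineMap (x + τ • p) (y + τ • q) (t / τ) with hc
  have hstart : Jres f τ (c 0) = x := by
    simp [hc, Jres_add_smul hbot hconv hlsc hτ hadm hp]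
  have hend : Jres f τ (c τ) = y := by
    simp [hc, div_self hτ.ne', Jres_add_smul hbot hconv hlsc hτ hadm hq]
  have hdist : ∀ s t, ‖c s - c t‖ = δ * |s - t| := by
    intro s t
    rw [← dist_eq_norm, dist_lineMap_lineMap, Real.dist_eq, dist_eq_norm_sub', hδ, ← sub_div,
      abs_div, abs_of_pos hτ]
    ring
  have hlip : LipschitzWith (L * δ).toNNReal (Jres f τ ∘ c) := by
    refine LipschitzWith.of_dist_le' fun s t ↦ ?_
    rw [dist_eq_norm, Real.dist_eq, mul_assoc, ← hdist]
    exact norm_Jres_sub_le hbot hconv hlsc hτ hadm hL ⟨x, p, hp⟩ _ _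
  have hslope : ∀ t ∈ Ioc 0 τ,
      gradNorm lam f ((Jres f τ ∘ c) t) ≤ ENNReal.ofReal (‖p‖ + (1 + L) * δ) := by
    intro t ht
    refine (gradNorm_Jres_le hbot hconv hlsc hτ hadm hL hp (c t)).trans ?_
    have hc₀ : x + τ • p = c 0 := by simp [hc]
    gcongr
    rw [hc₀, hdist, sub_zero, abs_of_pos ht.1, div_le_iff₀ hτ]
    exact mul_le_mul_of_nonneg_left ht.2 hδ₀
  calc GammaInf lam f τ x y
      ≤ actionFn lam f 0 τ (Jres f τ ∘ c) := iInf₂_le _ ⟨hstart, hend⟩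
    _ ≤ (ENNReal.ofReal (L * δ) ^ 2 + ENNReal.ofReal (‖p‖ + (1 + L) * δ) ^ 2)
          * ENNReal.ofReal (τ - 0) := actionFn_le_of_lipschitzWith hlip hτ.le hslope
    _ = ENNReal.ofReal (((L * δ) ^ 2 + (‖p‖ + (1 + L) * δ) ^ 2) * τ) := by
        rw [sub_zero, ← ENNReal.ofReal_pow (by positivity), ← ENNReal.ofReal_pow (by positivity),
          ← ENNReal.ofReal_add (by positivity) (by positivity),
          ← ENNReal.ofReal_mul (by positivity)]

end Interpolation

lemma sq_add_sq_le_of_le_add {L δ r a M : ℝ} (hL : 0 ≤ L) (hδ₀ : 0 ≤ δ) (hδ : δ ≤ r + 2 * M)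
    (ha₀ : 0 ≤ a) (ha : a ≤ M) :
    (L * δ) ^ 2 + (a + (1 + L) * δ) ^ 2
      ≤ 2 * (L ^ 2 + (1 + L) ^ 2) * r ^ 2 + 2 * (4 * L ^ 2 + (3 + 2 * L) ^ 2) * M ^ 2 := by
  calc (L * δ) ^ 2 + (a + (1 + L) * δ) ^ 2
      ≤ (L * (r + 2 * M)) ^ 2 + (M + (1 + L) * (r + 2 * M)) ^ 2 := by gcongr
    _ = (L * r + 2 * L * M) ^ 2 + ((1 + L) * r + (3 + 2 * L) * M) ^ 2 := by ring
    _ ≤ 2 * ((L * r) ^ 2 + (2 * L * M) ^ 2)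
          + 2 * (((1 + L) * r) ^ 2 + ((3 + 2 * L) * M) ^ 2) := add_le_add add_sq_le add_sq_le
    _ = _ := by ring

lemma norm_add_smul_sub_div_le {E : Type*} [SeminormedAddCommGroup E] [NormedSpace ℝ E] {τ M : ℝ}
    (hτ : 0 < τ) {x y p q : E} (hp : ‖p‖ ≤ M) (hq : ‖q‖ ≤ M) :
    ‖(y + τ • q) - (x + τ • p)‖ / τ ≤ ‖y - x‖ / τ + 2 * M := by
  rw [div_le_iff₀ hτ, add_mul, div_mul_cancel₀ _ hτ.ne', add_sub_add_comm, ← smul_sub]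
  calc ‖y - x + τ • (q - p)‖ ≤ ‖y - x‖ + τ * (‖q‖ + ‖p‖) := by
        refine (norm_add_le _ _).trans ?_
        rw [norm_smul_of_nonneg hτ.le]
        gcongr
        exact norm_sub_le _ _
    _ ≤ ‖y - x‖ + 2 * M * τ := by nlinarith

theorem statement17_general (lam : ℝ) (f : H → EReal)
    (hf : ProperFn f) (hconv : LambdaConvex lam f) (hlsc : LowerSemicontinuous f)
    (τ : ℝ) (hτ : 0 < τ) (hadm : 0 < 1 + τ * lam) (L : ℝ) (hL : (1 + τ * lam)⁻¹ ≤ L)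
    (x0 xτ : H) (h0 : (subdiff lam f x0).Nonempty) (h1 : (subdiff lam f xτ).Nonempty) :
    GammaInf lam f τ x0 xτ ≤ ENNReal.ofReal
      (2 * (L ^ 2 + (1 + L) ^ 2) / τ * ‖xτ - x0‖ ^ 2
        + 2 * (4 * L ^ 2 + (3 + 2 * L) ^ 2) * τ
          * max (‖gradMin lam f x0‖ ^ 2) (‖gradMin lam f xτ‖ ^ 2)) := by
  refine (GammaInf_le_of_mem_subdiff hf.2 hconv hlsc hτ hadm hL (gradMin_mem h0) (gradMin_mem h1)
    rfl).trans (ENNReal.ofReal_le_ofReal ?_)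
  set M := max ‖gradMin lam f x0‖ ‖gradMin lam f xτ‖
  have hmax : max (‖gradMin lam f x0‖ ^ 2) (‖gradMin lam f xτ‖ ^ 2) = M ^ 2 :=
    ((pow_left_monotoneOn (n := 2)).map_max (norm_nonneg _) (norm_nonneg _)).symm
  have hM₀ : ‖gradMin lam f x0‖ ≤ M := le_max_left _ _
  have hM₁ : ‖gradMin lam f xτ‖ ≤ M := le_max_right _ _
  refine (mul_le_mul_of_nonneg_right (sq_add_sq_le_of_le_add ((inv_pos.mpr hadm).le.trans hL)
    (by positivity) (norm_add_smul_sub_div_le hτ hM₀ hM₁) (norm_nonneg _) hM₀) hτ.le).trans_eq ?_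
  rw [hmax]
  field_simp

/-- the interpolation lemma with `δ = τ`. -/
theorem statement17 (lam : ℝ) (f : H → EReal)
    (hf : ProperFn f) (hconv : LambdaConvex lam f) (hlsc : LowerSemicontinuous f)
    (τ : ℝ) (hτ : 0 < τ) (hadm : 0 < 1 + τ * lam) (hb : (1 + τ * lam)⁻¹ ≤ 2)
    (x0 xτ : H) (h0 : (subdiff lam f x0).Nonempty) (h1 : (subdiff lam f xτ).Nonempty) :
    GammaInf lam f τ x0 xτ ≤ ENNReal.ofReal
      (52 / τ * ‖xτ - x0‖ ^ 2
        + 210 * τ * max (‖gradMin lam f x0‖ ^ 2) (‖gradMin lam f xτ‖ ^ 2)) := by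
  refine (statement17_general lam f hf hconv hlsc τ hτ hadm 2 hb x0 xτ h0 h1).trans ?_
  gcongr <;> norm_num

end
end

section
/- Let H be a real Hilbert space, λ ∈ ℝ, and let (f_h) be a sequence of proper, λ-convex, lower semicontinuous functions f_h : H → (-∞,∞] that Mosco-converges to a proper, λ-convex, lower semicontinuous function f : H → (-∞,∞]. Let τ > 0 be admissible, i.e. τ < −1/λ if λ < 0. Then for every x ∈ H: (i) the Moreau–Yosida regularizations converge, lim_h (f_h)_τ(x) = f_τ(x); and (ii) the resolvents converge strongly, lim_h J_{f_h,τ}(x) = J_{f,τ}(x) in the norm of H. -/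
open Filter Topology MeasureTheory Set
open scoped ENNReal RealInnerProductSpace

noncomputable section

attribute [local instance] Classical.propDecidable

variable {H : Type*} [NormedAddCommGroup H] [InnerProductSpace ℝ H] [CompleteSpace H]

/-!
Adding `‖y - x‖² / (2τ)` to a `λ`-convex function makes it `(λ + 1/τ)`-convex, and admissibility of
`τ` says that this modulus is positive; the penalized functions still Mosco-converge because the
squared norm is continuous and weakly lower semicontinuous. It remains to pass to the limit in
minimizers of uniformly strongly convex functions. The `liminf` inequality bounds these functions
below near a point, uniformly for large indices, and strong convexity turns such a bound into a
bound on the minimizers. Weak compactness and the `liminf` inequality then give the convergence of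
the minima. Finally a minimizer and a recovery point of the limit minimizer almost attain the same
minimum, so strong convexity makes their distance tend to zero.
-/

section WeakConvergence

/-- Weak convergence in `H` along a filter, tested against inner products as in `Mosco`. -/
def WeakTendsto {ι : Type*} (u : ι → H) (l : Filter ι) (x : H) : Prop :=
  ∀ p : H, Tendsto (fun i => ⟪u i, p⟫) l (𝓝 ⟪x, p⟫)

omit [CompleteSpace H] in
lemma WeakTendsto.of_tendsto {ι : Type*} {u : ι → H} {l : Filter ι} {x : H}
    (hu : Tendsto u l (𝓝 x)) : WeakTendsto u l x :=
  fun _ => hu.inner tendsto_const_nhds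

lemma tendsto_extend_const {X : Type*} [TopologicalSpace X] {u : ℕ → X} {a : X} {φ : ℕ → ℕ}
    (hφ : StrictMono φ) (hu : Tendsto u atTop (𝓝 a)) :
    Tendsto (Function.extend φ u fun _ => a) atTop (𝓝 a) := by
  intro s hs
  obtain ⟨N, hN⟩ := eventually_atTop.1 (hu.eventually hs)
  refine eventually_atTop.2 ⟨φ N, fun n hn => ?_⟩
  by_cases hk : ∃ k, φ k = n
  · obtain ⟨k, rfl⟩ := hk
    rw [hφ.injective.extend_apply]
    exact hN k (hφ.le_iff_le.1 hn)
  · rw [Function.extend_apply' _ _ _ hk]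
    exact mem_of_mem_nhds hs

omit [CompleteSpace H] in
lemma WeakTendsto.extend_const {u : ℕ → H} {x : H} {φ : ℕ → ℕ} (hφ : StrictMono φ)
    (hu : WeakTendsto u atTop x) :
    WeakTendsto (Function.extend φ u fun _ => x) atTop x := by
  intro p
  simp only [Function.apply_extend (fun v : H => ⟪v, p⟫)]
  exact tendsto_extend_const hφ (hu p)

omit [CompleteSpace H] in
lemma WeakTendsto.sq_dist_le_liminf {ι : Type*} {u : ι → H} {l : Filter ι} [l.NeBot] {w : H}
    (hu : WeakTendsto u l w) {c : ℝ} (hc : 0 ≤ c) (x : H) :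
    ((‖w - x‖ ^ 2 / c : ℝ) : EReal) ≤ liminf (fun i => ((‖u i - x‖ ^ 2 / c : ℝ) : EReal)) l := by
  -- The squared distance dominates its tangent at `w`, which is weakly continuous.
  have tangent_le (v : H) :
      (‖w - x‖ ^ 2 + 2 * (⟪v, w - x⟫ - ⟪w, w - x⟫)) / c ≤ ‖v - x‖ ^ 2 / c := by
    have expand : ‖v - x‖ ^ 2 = ‖w - x‖ ^ 2 + 2 * (⟪v, w - x⟫ - ⟪w, w - x⟫) + ‖v - w‖ ^ 2 := by
      rw [← sub_add_sub_cancel v w x, norm_add_sq_real, inner_sub_left]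
      ring
    gcongr
    linarith [sq_nonneg ‖v - w‖]
  have tangent_tendsto : Tendsto
      (fun i => (((‖w - x‖ ^ 2 + 2 * (⟪u i, w - x⟫ - ⟪w, w - x⟫)) / c : ℝ) : EReal)) l
      (𝓝 ((‖w - x‖ ^ 2 / c : ℝ) : EReal)) := by
    refine EReal.tendsto_coe.2 ?_
    simpa using ((((hu (w - x)).sub_const ⟪w, w - x⟫).const_mul 2).const_add
      (‖w - x‖ ^ 2)).div_const c
  rw [← tangent_tendsto.liminf_eq]
  exact liminf_le_liminf (.of_forall fun i => EReal.coe_le_coe (tangent_le (u i)))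

lemma exists_weakTendsto_subseq {u : ℕ → H} {R : ℝ} (hR : ∀ n, ‖u n‖ ≤ R) :
    ∃ (w : H) (φ : ℕ → ℕ), StrictMono φ ∧ WeakTendsto (u ∘ φ) atTop w := by
  -- Sequential Banach–Alaoglu needs separability, so pass to the closed span of the sequence.
  let K : Submodule ℝ H := (Submodule.span ℝ (range u)).topologicalClosure
  have : TopologicalSpace.SeparableSpace K := by
    have hsep : TopologicalSpace.IsSeparable (K : Set H) := by
      simpa [K] using ((countable_range u).isSeparable.span (R := ℝ)).closure
    exact hsep.separableSpace
  have : CompleteSpace K := (Submodule.isClosed_topologicalClosure _).completeSpace_coe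
  have mem_K (n : ℕ) : u n ∈ K :=
    Submodule.le_topologicalClosure _ (Submodule.subset_span (mem_range_self n))
  let T (n : ℕ) : WeakDual ℝ K :=
    StrongDual.toWeakDual (InnerProductSpace.toDual ℝ K ⟨u n, mem_K n⟩)
  have T_mem (n : ℕ) : T n ∈ WeakDual.toStrongDual ⁻¹' Metric.closedBall (0 : StrongDual ℝ K) R :=
    (mem_closedBall_zero_iff (E := StrongDual ℝ K)).2
      (((InnerProductSpace.toDual ℝ K).norm_map ⟨u n, mem_K n⟩).trans_le (hR n))
  obtain ⟨L, -, φ, hφ, hL⟩ := WeakDual.isSeqCompact_closedBall ℝ K 0 R T_mem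
  let w : K := (InnerProductSpace.toDual ℝ K).symm (WeakDual.toStrongDual L)
  refine ⟨w, φ, hφ, fun p => ?_⟩
  have inner_eq (v : K) : ⟪(v : H), p⟫ = ⟪v, K.orthogonalProjectionOnto p⟫ :=
    (Submodule.inner_orthogonalProjectionOnto_eq_of_mem_left v p).symm
  have hw : ⟪(w : H), p⟫ = L (K.orthogonalProjectionOnto p) :=
    (inner_eq w).trans InnerProductSpace.toDual_symm_apply
  rw [hw]
  exact (((WeakDual.eval_continuous (𝕜 := ℝ) (K.orthogonalProjectionOnto p)).tendsto L).comp
    hL).congr fun n => (inner_eq ⟨u (φ n), mem_K _⟩).symm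

end WeakConvergence

section StrongConvexity

omit [CompleteSpace H]

variable {lam μ : ℝ} {f g G : H → EReal}

lemma LambdaConvex.add (hf : LambdaConvex lam f) (hg : LambdaConvex μ g) :
    LambdaConvex (lam + μ) (fun y => f y + g y) := by
  intro y z t ht0 ht1
  have ht0' : (0 : EReal) ≤ t := EReal.coe_nonneg.2 ht0
  have ht1' : (0 : EReal) ≤ (1 - t : ℝ) := EReal.coe_nonneg.2 (sub_nonneg.2 ht1)
  have rearrange (a b c d : EReal) (r s : ℝ) :
      (a + b - r) + (c + d - s) = (a + c) + (b + d) - (r + s : ℝ) := by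
    simp only [sub_eq_add_neg, ← EReal.coe_neg]
    rw [neg_add, EReal.coe_add]
    abel
  refine (add_le_add (hf y z t ht0 ht1) (hg y z t ht0 ht1)).trans_eq ?_
  rw [rearrange, EReal.left_distrib_of_nonneg_of_ne_top ht1' (EReal.coe_ne_top _),
    EReal.left_distrib_of_nonneg_of_ne_top ht0' (EReal.coe_ne_top _)]
  congr 2
  ring

lemma norm_sq_convex_combination (u v : H) (t : ℝ) :
    ‖(1 - t) • u + t • v‖ ^ 2 = (1 - t) * ‖u‖ ^ 2 + t * ‖v‖ ^ 2 - t * (1 - t) * ‖u - v‖ ^ 2 := by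
  simp only [← real_inner_self_eq_norm_sq, inner_add_left, inner_add_right, inner_sub_left,
    inner_sub_right, real_inner_smul_left, real_inner_smul_right, real_inner_comm u v]
  ring

lemma lambdaConvex_sq_dist (τ : ℝ) (x : H) :
    LambdaConvex (1 / τ) (fun y => ((‖y - x‖ ^ 2 / (2 * τ) : ℝ) : EReal)) := by
  intro y z t _ _
  have recenter : (1 - t) • y + t • z - x = (1 - t) • (y - x) + t • (z - x) := by module
  dsimp only
  rw [recenter, norm_sq_convex_combination, sub_sub_sub_cancel_right]
  norm_cast
  apply le_of_eq
  ring

lemma LambdaConvex.apply_le_coe (hG : LambdaConvex μ G) {y z : H} {a b t : ℝ} (ht0 : 0 ≤ t)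
    (ht1 : t ≤ 1) (hy : G y ≤ a) (hz : G z ≤ b) :
    G ((1 - t) • y + t • z)
      ≤ (((1 - t) * a + t * b - μ / 2 * (t * (1 - t)) * ‖y - z‖ ^ 2 : ℝ) : EReal) := by
  refine (hG y z t ht0 ht1).trans ?_
  have ht0' : (0 : EReal) ≤ t := EReal.coe_nonneg.2 ht0
  have ht1' : (0 : EReal) ≤ (1 - t : ℝ) := EReal.coe_nonneg.2 (sub_nonneg.2 ht1)
  push_cast at ht1' ⊢
  exact EReal.sub_le_sub (add_le_add (mul_le_mul_of_nonneg_left hy ht1')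
    (mul_le_mul_of_nonneg_left hz ht0')) le_rfl

lemma LambdaConvex.norm_sub_le_of_le_add (hG : LambdaConvex μ G) (hμ : 0 < μ) {m ε : ℝ}
    (hm : ∀ w, m ≤ G w) (hε : 0 ≤ ε) {y z : H} (hy : G y ≤ (m + μ / 8 * ε ^ 2 : ℝ))
    (hz : G z ≤ (m + μ / 8 * ε ^ 2 : ℝ)) : ‖y - z‖ ≤ ε := by
  have midpoint := (hm _).trans (hG.apply_le_coe (t := 1 / 2) (by norm_num) (by norm_num) hy hz)
  rw [EReal.coe_le_coe_iff] at midpoint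
  have scaled_sq_le : μ / 8 * ‖y - z‖ ^ 2 ≤ μ / 8 * ε ^ 2 := by linarith
  exact le_of_sq_le_sq (le_of_mul_le_mul_left scaled_sq_le (by positivity)) hε

/-- For `y` outside the ball, convexity is applied at the point of the segment `[x₀, y]` at
distance `r` from `x₀`. -/
lemma LambdaConvex.quadratic_growth (hG : LambdaConvex μ G) (hμ : 0 < μ) {x₀ : H} {r a c : ℝ}
    (hr : 0 < r) (ha : G x₀ ≤ a) (hc : ∀ w ∈ Metric.closedBall x₀ r, c ≤ G w) (y : H) :
    ((a - ((a - c) / r + μ * r / 2) ^ 2 / μ + μ / 4 * ‖y - x₀‖ ^ 2 : ℝ) : EReal) ≤ G y := by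
  refine EReal.le_of_forall_lt_iff_le.1 fun b hb => EReal.coe_le_coe ?_
  set D := ‖y - x₀‖ with hD
  rcases le_total D r with hDr | hrD
  · have hcb : c ≤ b := by
      exact_mod_cast (hc y (mem_closedBall_iff_norm.2 hDr)).trans hb.le
    have complete_square : a - ((a - c) / r + μ * r / 2) ^ 2 / μ
        = c - ((a - c) / r) ^ 2 / μ - μ / 4 * r ^ 2 := by
      field_simp
      ring
    have hDr_sq : μ / 4 * D ^ 2 ≤ μ / 4 * r ^ 2 := by gcongr
    have square_nonneg : 0 ≤ ((a - c) / r) ^ 2 / μ := by positivity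
    linarith
  · have hD0 : 0 < D := hr.trans_le hrD
    have mem_ball : (1 - r / D) • x₀ + (r / D) • y ∈ Metric.closedBall x₀ r := by
      have radial : (1 - r / D) • x₀ + (r / D) • y - x₀ = (r / D) • (y - x₀) := by module
      rw [mem_closedBall_iff_norm, radial, norm_smul, Real.norm_of_nonneg (by positivity), ← hD,
        div_mul_cancel₀ _ hD0.ne']
    have convexity := (hc _ mem_ball).trans
      (hG.apply_le_coe (by positivity) ((div_le_one hD0).2 hrD) ha hb.le)
    rw [EReal.coe_le_coe_iff, norm_sub_rev, ← hD] at convexity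
    have linear_bound : a - D * ((a - c) / r + μ * r / 2) + μ / 2 * D ^ 2 ≤ b := by
      have scaled := mul_le_mul_of_nonneg_left convexity (by positivity : 0 ≤ D / r)
      field_simp at scaled ⊢
      linarith
    have complete_square : 0 ≤ (μ * D - 2 * ((a - c) / r + μ * r / 2)) ^ 2 / (4 * μ) := by
      positivity
    have expand : (μ * D - 2 * ((a - c) / r + μ * r / 2)) ^ 2 / (4 * μ)
        = μ / 4 * D ^ 2 - D * ((a - c) / r + μ * r / 2) + ((a - c) / r + μ * r / 2) ^ 2 / μ := by
      field_simp
      ring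
    linarith

lemma LambdaConvex.norm_sub_le_of_le (hG : LambdaConvex μ G) (hμ : 0 < μ) {x₀ : H} {r a c : ℝ}
    (hr : 0 < r) (ha : G x₀ ≤ a) (hc : ∀ w ∈ Metric.closedBall x₀ r, c ≤ G w) {y : H}
    (hy : G y ≤ a) : ‖y - x₀‖ ≤ 2 * ((a - c) / r + μ * r / 2) / μ := by
  have hca : c ≤ a := by
    exact_mod_cast (hc x₀ (Metric.mem_closedBall_self hr.le)).trans ha
  have slope_nonneg : 0 ≤ (a - c) / r + μ * r / 2 :=
    add_nonneg (div_nonneg (sub_nonneg.2 hca) hr.le) (by positivity)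
  have growth := (hG.quadratic_growth hμ hr ha hc y).trans hy
  rw [EReal.coe_le_coe_iff] at growth
  refine le_of_sq_le_sq ?_ (div_nonneg (mul_nonneg two_pos.le slope_nonneg) hμ.le)
  have sq_radius : (2 * ((a - c) / r + μ * r / 2) / μ) ^ 2
      = 4 / μ * (((a - c) / r + μ * r / 2) ^ 2 / μ) := by
    field_simp
    ring
  rw [sq_radius]
  calc ‖y - x₀‖ ^ 2 = 4 / μ * (μ / 4 * ‖y - x₀‖ ^ 2) := by field_simp
    _ ≤ 4 / μ * (((a - c) / r + μ * r / 2) ^ 2 / μ) := by gcongr; linarith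

lemma LambdaConvex.exists_forall_coe_le (hG : LambdaConvex μ G) (hμ : 0 < μ) (hp : ProperFn G)
    (hlsc : LowerSemicontinuous G) : ∃ m : ℝ, ∀ y, m ≤ G y := by
  obtain ⟨x₀, hx₀⟩ := hp.1
  obtain ⟨c, -, hc⟩ := EReal.exists_between_coe_real (bot_lt_iff_ne_bot.2 (hp.2 x₀))
  obtain ⟨r, hr, hball⟩ := Metric.nhds_basis_closedBall.eventually_iff.1 (hlsc x₀ c hc)
  have growth := hG.quadratic_growth hμ hr (EReal.coe_toReal hx₀ (hp.2 x₀)).ge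
    fun w hw => (hball hw).le
  refine ⟨_, fun y => (EReal.coe_le_coe (le_add_of_nonneg_right ?_)).trans (growth y)⟩
  positivity

lemma LambdaConvex.cauchySeq_of_tendsto (hG : LambdaConvex μ G) (hμ : 0 < μ) {m : ℝ}
    (hm : ∀ w, m ≤ G w) {u : ℕ → H} (hu : Tendsto (fun n => G (u n)) atTop (𝓝 m)) :
    CauchySeq u := by
  refine Metric.uniformity_basis_dist_le.cauchySeq_iff.2 fun ε hε => ?_
  have hlt : (m : EReal) < (m + μ / 8 * ε ^ 2 : ℝ) :=
    EReal.coe_lt_coe (lt_add_of_pos_right m (by positivity))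
  obtain ⟨N, hN⟩ := eventually_atTop.1 (hu.eventually_lt_const hlt)
  refine ⟨N, fun i hi j hj => ?_⟩
  change dist (u i) (u j) ≤ ε
  rw [dist_eq_norm]
  exact hG.norm_sub_le_of_le_add hμ hm hε.le (hN i hi).le (hN j hj).le

end StrongConvexity

lemma LambdaConvex.exists_forall_le_s18 {μ : ℝ} {G : H → EReal} (hG : LambdaConvex μ G) (hμ : 0 < μ)
    (hp : ProperFn G) (hlsc : LowerSemicontinuous G) : ∃ y, ∀ z, G y ≤ G z := by
  obtain ⟨x₀, hx₀⟩ := hp.1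
  obtain ⟨c, hc⟩ := hG.exists_forall_coe_le hμ hp hlsc
  obtain ⟨m, hm⟩ : ∃ m : ℝ, (m : EReal) = ⨅ y, G y :=
    ⟨_, EReal.coe_toReal ((iInf_le G x₀).trans_lt hx₀.lt_top).ne
      ((EReal.bot_lt_coe c).trans_le (le_iInf hc)).ne'⟩
  have m_le (z : H) : m ≤ G z := hm.trans_le (iInf_le G z)
  obtain ⟨v, -, hv, hv_mem⟩ := exists_seq_tendsto_sInf (range_nonempty G) (OrderBot.bddBelow _)
  choose u hu using hv_mem
  have hu_lim : Tendsto (fun n => G (u n)) atTop (𝓝 m) := by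
    simpa only [hu, hm, sInf_range] using hv
  obtain ⟨y, hy⟩ := cauchySeq_tendsto_of_complete (hG.cauchySeq_of_tendsto hμ m_le hu_lim)
  refine ⟨y, fun z => le_trans ?_ (m_le z)⟩
  calc G y ≤ liminf G (𝓝 y) := hlsc.le_liminf y
    _ ≤ liminf (fun n => G (u n)) atTop := liminf_le_liminf_of_le hy
    _ = m := hu_lim.liminf_eq

section MoscoConvergence

variable {Gh : ℕ → H → EReal} {G : H → EReal}

omit [CompleteSpace H] in
lemma Mosco.comp_strictMono (hM : Mosco Gh G) {φ : ℕ → ℕ} (hφ : StrictMono φ) :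
    Mosco (Gh ∘ φ) G := by
  refine ⟨fun x => ?_, fun z w hz => ?_⟩
  · obtain ⟨xh, hxh, hlimsup⟩ := hM.1 x
    exact ⟨xh ∘ φ, hxh.comp hφ.tendsto_atTop,
      (limsup_le_limsup_of_le (u := fun h => Gh h (xh h)) hφ.tendsto_atTop).trans hlimsup⟩
  · let Z : ℕ → H := Function.extend φ z fun _ => w
    calc G w ≤ liminf (fun h => Gh h (Z h)) atTop := hM.2 Z w (WeakTendsto.extend_const hφ hz)
      _ ≤ liminf (fun k => Gh (φ k) (Z (φ k))) atTop :=
        liminf_le_liminf_of_le (u := fun h => Gh h (Z h)) hφ.tendsto_atTop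
      _ = liminf (fun k => (Gh ∘ φ) k (z k)) atTop := by
        simp only [Z, hφ.injective.extend_apply, Function.comp_apply]

omit [CompleteSpace H] in
lemma Mosco.add_coe (hM : Mosco Gh G) {q : H → ℝ} (hq : Continuous q)
    (hq_weak : ∀ (u : ℕ → H) (x : H), WeakTendsto u atTop x →
      (q x : EReal) ≤ liminf (fun n => (q (u n) : EReal)) atTop) :
    Mosco (fun h y => Gh h y + q y) (fun y => G y + q y) := by
  refine ⟨fun x => ?_, fun z w hz =>
    (add_le_add (hM.2 z w hz) (hq_weak z w hz)).trans EReal.le_liminf_add⟩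
  obtain ⟨xh, hxh, hlimsup⟩ := hM.1 x
  have hq_lim : limsup (fun h => (q (xh h) : EReal)) atTop = q x :=
    (EReal.tendsto_coe.2 ((hq.tendsto x).comp hxh)).limsup_eq
  refine ⟨xh, hxh, (EReal.limsup_add_le ?_ ?_).trans (add_le_add hlimsup hq_lim.le)⟩
  · exact .inr (hq_lim ▸ EReal.coe_ne_top _)
  · exact .inr (hq_lim ▸ EReal.coe_ne_bot _)

omit [CompleteSpace H] in
lemma Mosco.exists_eventually_le_on_closedBall (hM : Mosco Gh G) {x : H} (hx : G x ≠ ⊥) :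
    ∃ r > 0, ∃ c : ℝ, ∀ᶠ h in atTop, ∀ w ∈ Metric.closedBall x r, c ≤ Gh h w := by
  by_contra! unbounded
  have frequently_small (n : ℕ) :
      ∃ᶠ h in atTop, ∃ w ∈ Metric.closedBall x (1 / ((n : ℝ) + 1)), Gh h w < (-n : ℝ) := by
    simpa only [not_eventually, not_forall, not_le, exists_prop]
      using unbounded _ Nat.one_div_pos_of_nat (-n)
  obtain ⟨φ, hφ, hφ_small⟩ := extraction_forall_of_frequently frequently_small
  choose z hz_mem hz_lt using hφ_small
  have hz : Tendsto z atTop (𝓝 x) := tendsto_iff_dist_tendsto_zero.2 <|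
    squeeze_zero (fun _ => dist_nonneg) hz_mem (tendsto_one_div_add_atTop_nhds_zero_nat (𝕜 := ℝ))
  have hz_bot : Tendsto (fun n => Gh (φ n) (z n)) atTop (𝓝 ⊥) := by
    refine EReal.tendsto_nhds_bot_iff_real.2 fun b => ?_
    filter_upwards [tendsto_natCast_atTop_atTop.eventually_ge_atTop (-b)] with n hn
    exact (hz_lt n).trans_le (EReal.coe_le_coe (neg_le.1 hn))
  have le_liminf := (hM.comp_strictMono hφ).2 z x (WeakTendsto.of_tendsto hz)
  exact hx (le_bot_iff.1 (le_liminf.trans_eq hz_bot.liminf_eq))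

lemma Mosco.le_liminf_of_norm_le (hM : Mosco Gh G) {m : EReal} (hm : ∀ w, m ≤ G w) {y : ℕ → H}
    {R : ℝ} (hy : ∀ᶠ h in atTop, ‖y h‖ ≤ R) : m ≤ liminf (fun h => Gh h (y h)) atTop := by
  by_contra! liminf_lt
  obtain ⟨c, hc, hcm⟩ := exists_between liminf_lt
  obtain ⟨φ, hφ, hφ_small⟩ := extraction_of_frequently_atTop
    ((frequently_lt_of_liminf_lt (by isBoundedDefault) hc).and_eventually hy)
  obtain ⟨w, ψ, hψ, hw⟩ := exists_weakTendsto_subseq (u := y ∘ φ) fun k => (hφ_small k).2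
  have liminf_le_c : liminf (fun k => Gh (φ (ψ k)) (y (φ (ψ k)))) atTop ≤ c :=
    liminf_le_of_frequently_le' (Frequently.of_forall fun k => (hφ_small (ψ k)).1.le)
  exact hcm.not_ge <| (hm w).trans <|
    ((hM.comp_strictMono (hφ.comp hψ)).2 _ w hw).trans liminf_le_c

omit [CompleteSpace H] in
lemma Mosco.exists_eventually_norm_le {μ : ℝ} (hμ : 0 < μ) (hG : ∀ h, LambdaConvex μ (Gh h))
    (hM : Mosco Gh G) (hp : ProperFn G) {y : ℕ → H} (hy : ∀ h z, Gh h (y h) ≤ Gh h z) :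
    ∃ R, ∀ᶠ h in atTop, ‖y h‖ ≤ R := by
  obtain ⟨x, hx⟩ := hp.1
  obtain ⟨xh, hxh, hlimsup⟩ := hM.1 x
  obtain ⟨r, hr, c, hc⟩ := hM.exists_eventually_le_on_closedBall (hp.2 x)
  obtain ⟨a, hxa, -⟩ := EReal.exists_between_coe_real hx.lt_top
  let K := 2 * ((a - c) / (r / 2) + μ * (r / 2) / 2) / μ
  refine ⟨‖x‖ + r / 2 + K, ?_⟩
  filter_upwards [hc, eventually_lt_of_limsup_lt (hlimsup.trans_lt hxa),
    hxh.eventually (Metric.closedBall_mem_nhds x (half_pos hr))] with h hch hah hxr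
  have ball_subset : Metric.closedBall (xh h) (r / 2) ⊆ Metric.closedBall x r :=
    Metric.closedBall_subset_closedBall' (by linarith [Metric.mem_closedBall.1 hxr])
  have near_recovery : ‖y h - xh h‖ ≤ K :=
    (hG h).norm_sub_le_of_le hμ (half_pos hr) hah.le (fun w hw => hch w (ball_subset hw))
      ((hy h _).trans hah.le)
  have recovery_near : ‖xh h - x‖ ≤ r / 2 := mem_closedBall_iff_norm.1 hxr
  calc ‖y h‖ = ‖x + (xh h - x) + (y h - xh h)‖ := by congr 1; abel
    _ ≤ ‖x‖ + ‖xh h - x‖ + ‖y h - xh h‖ := norm_add₃_le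
    _ ≤ ‖x‖ + r / 2 + K := by gcongr

theorem Mosco.tendsto_min {μ : ℝ} (hμ : 0 < μ) (hG : ∀ h, LambdaConvex μ (Gh h))
    (hM : Mosco Gh G) (hp : ProperFn G) {y : ℕ → H} (hy : ∀ h z, Gh h (y h) ≤ Gh h z) {y₀ : H}
    (hy₀ : ∀ z, G y₀ ≤ G z) : Tendsto (fun h => Gh h (y h)) atTop (𝓝 (G y₀)) := by
  obtain ⟨R, hR⟩ := hM.exists_eventually_norm_le hμ hG hp hy
  obtain ⟨xh, -, hlimsup⟩ := hM.1 y₀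
  refine tendsto_of_le_liminf_of_limsup_le (hM.le_liminf_of_norm_le hy₀ hR) ?_
  exact (limsup_le_limsup (.of_forall fun h => hy h (xh h))).trans hlimsup

/-- For large `h`, both the minimizer and the recovery point of `y₀` almost minimize `Gh h`, so
strong convexity brings them together. -/
theorem Mosco.tendsto_argmin {μ : ℝ} (hμ : 0 < μ) (hG : ∀ h, LambdaConvex μ (Gh h))
    (hM : Mosco Gh G) (hp : ProperFn G) {y : ℕ → H} (hy : ∀ h z, Gh h (y h) ≤ Gh h z) {y₀ : H}
    (hy₀ : ∀ z, G y₀ ≤ G z) : Tendsto y atTop (𝓝 y₀) := by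
  obtain ⟨xh, hxh, hlimsup⟩ := hM.1 y₀
  obtain ⟨x, hx⟩ := hp.1
  obtain ⟨a, ha⟩ : ∃ a : ℝ, (a : EReal) = G y₀ :=
    ⟨_, EReal.coe_toReal ((hy₀ x).trans_lt hx.lt_top).ne (hp.2 y₀)⟩
  have hmin := hM.tendsto_min hμ hG hp hy hy₀
  rw [← ha] at hmin hlimsup
  suffices gap : Tendsto (fun h => xh h - y h) atTop (𝓝 0) by simpa using hxh.sub gap
  refine Metric.nhds_basis_closedBall.tendsto_right_iff.2 fun ε hε => ?_
  set δ := μ / 16 * ε ^ 2 with hδ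
  have hδ_pos : 0 < δ := by positivity
  filter_upwards [hmin.eventually_const_lt (EReal.coe_lt_coe (sub_lt_self a hδ_pos)),
    eventually_lt_of_limsup_lt
      (hlimsup.trans_lt (EReal.coe_lt_coe (lt_add_of_pos_right a hδ_pos)))] with h hlow hup
  rw [mem_closedBall_zero_iff]
  have two_mul_δ : a + δ = a - δ + μ / 8 * ε ^ 2 := by rw [hδ]; ring
  rw [two_mul_δ] at hup
  exact (hG h).norm_sub_le_of_le_add hμ (fun w => hlow.le.trans (hy h w)) hε.le hup.le
    ((hy h _).trans hup.le)

end MoscoConvergence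

section Resolvent

/-- The functional `y ↦ f y + ‖y - x‖² / (2τ)` whose minimizer is `Jres f τ x` and whose minimum
is `moreau f τ x`. -/
def proxObjective (f : H → EReal) (τ : ℝ) (x y : H) : EReal :=
  f y + ((‖y - x‖ ^ 2 / (2 * τ) : ℝ) : EReal)

variable {lam τ : ℝ} {f : H → EReal}

omit [CompleteSpace H] in
lemma LambdaConvex.proxObjective (hf : LambdaConvex lam f) (x : H) :
    LambdaConvex (lam + 1 / τ) (proxObjective f τ x) :=
  hf.add (lambdaConvex_sq_dist τ x)

omit [CompleteSpace H] [InnerProductSpace ℝ H] in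
lemma ProperFn.proxObjective (hf : ProperFn f) (x : H) : ProperFn (proxObjective f τ x) := by
  obtain ⟨x₀, hx₀⟩ := hf.1
  exact ⟨⟨x₀, EReal.add_ne_top hx₀ (EReal.coe_ne_top _)⟩,
    fun y => EReal.add_eq_bot_iff.not.2 (not_or.2 ⟨hf.2 y, EReal.coe_ne_bot _⟩)⟩

omit [CompleteSpace H] [InnerProductSpace ℝ H] in
lemma lowerSemicontinuous_proxObjective (hf : LowerSemicontinuous f) (x : H) :
    LowerSemicontinuous (proxObjective f τ x) := by
  have continuous_penalty : Continuous fun y : H => ((‖y - x‖ ^ 2 / (2 * τ) : ℝ) : EReal) :=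
    continuous_coe_real_ereal.comp (by fun_prop)
  exact hf.add' continuous_penalty.lowerSemicontinuous fun y =>
    EReal.continuousAt_add (.inr (EReal.coe_ne_bot _)) (.inr (EReal.coe_ne_top _))

omit [CompleteSpace H] in
lemma Mosco.proxObjective {fh : ℕ → H → EReal} (hM : Mosco fh f) (hτ : 0 < τ) (x : H) :
    Mosco (fun h => proxObjective (fh h) τ x) (proxObjective f τ x) :=
  hM.add_coe (by fun_prop) fun _ _ hu => hu.sq_dist_le_liminf (by positivity) x

lemma proxObjective_Jres_le (hμ : 0 < lam + 1 / τ) (hp : ProperFn f) (hf : LambdaConvex lam f)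
    (hlsc : LowerSemicontinuous f) (x z : H) :
    proxObjective f τ x (Jres f τ x) ≤ proxObjective f τ x z := by
  have hex : ∃ y, ∀ z, proxObjective f τ x y ≤ proxObjective f τ x z :=
    (hf.proxObjective x).exists_forall_le_s18 hμ (hp.proxObjective x)
      (lowerSemicontinuous_proxObjective hlsc x)
  have Jres_eq : Jres f τ x = hex.choose := dif_pos hex
  exact Jres_eq ▸ hex.choose_spec z

lemma coe_moreau (hμ : 0 < lam + 1 / τ) (hp : ProperFn f) (hf : LambdaConvex lam f)
    (hlsc : LowerSemicontinuous f) (x : H) :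
    (moreau f τ x : EReal) = proxObjective f τ x (Jres f τ x) := by
  obtain ⟨x₀, hx₀⟩ := (hp.proxObjective (τ := τ) x).1
  have objective_ne_top : proxObjective f τ x (Jres f τ x) ≠ ⊤ :=
    ((proxObjective_Jres_le hμ hp hf hlsc x x₀).trans_lt hx₀.lt_top).ne
  have apply_ne_top : f (Jres f τ x) ≠ ⊤ := fun h =>
    objective_ne_top (by rw [_root_.proxObjective, h, EReal.top_add_coe])
  rw [moreau, EReal.coe_add, EReal.coe_toReal apply_ne_top (hp.2 _), _root_.proxObjective]

lemma add_one_div_pos_of_admissible (hτ : 0 < τ) (hadm : lam < 0 → τ < -1 / lam) :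
    0 < lam + 1 / τ := by
  rcases le_or_gt 0 lam with hlam | hlam
  · positivity
  · have mul_gt : -1 < τ * lam := (lt_div_iff_of_neg hlam).1 (hadm hlam)
    calc 0 < (τ * lam + 1) / τ := div_pos (by linarith) hτ
      _ = lam + 1 / τ := by field_simp

end Resolvent

/-- Mosco convergence implies convergence of the Moreau–Yosida
regularizations and of the resolvents. -/
theorem statement18 (lam : ℝ) (fh : ℕ → H → EReal) (f : H → EReal)
    (hfh_proper : ∀ h, ProperFn (fh h)) (hfh_conv : ∀ h, LambdaConvex lam (fh h))
    (hfh_lsc : ∀ h, LowerSemicontinuous (fh h))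
    (hf_proper : ProperFn f) (hf_conv : LambdaConvex lam f) (hf_lsc : LowerSemicontinuous f)
    (hM : Mosco fh f)
    (τ : ℝ) (hτ : 0 < τ) (hadm : lam < 0 → τ < -1 / lam) (x : H) :
    Tendsto (fun h => moreau (fh h) τ x) atTop (𝓝 (moreau f τ x)) ∧
    Tendsto (fun h => Jres (fh h) τ x) atTop (𝓝 (Jres f τ x)) := by
  have hμ := add_one_div_pos_of_admissible hτ hadm
  have hG (h : ℕ) : LambdaConvex (lam + 1 / τ) (proxObjective (fh h) τ x) :=
    (hfh_conv h).proxObjective x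
  have hGM := hM.proxObjective hτ x
  have hGp := hf_proper.proxObjective (τ := τ) x
  have hJh (h : ℕ) := proxObjective_Jres_le hμ (hfh_proper h) (hfh_conv h) (hfh_lsc h) x
  have hJ := proxObjective_Jres_le hμ hf_proper hf_conv hf_lsc x
  refine ⟨EReal.tendsto_coe.1 ?_, hGM.tendsto_argmin hμ hG hGp hJh hJ⟩
  simp only [coe_moreau hμ hf_proper hf_conv hf_lsc,
    fun h => coe_moreau hμ (hfh_proper h) (hfh_conv h) (hfh_lsc h) x]
  exact hGM.tendsto_min hμ hG hGp hJh hJ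

end
end
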